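/- arXiv:2502.13112 — 2 statements merged into one kernel-verified Lean document; each statement's English description precedes it below -/
import Mathlib

section
/- (Feasibility recursion.) Under (A1)–(A4), for any step size η > 0 and tightening parameter ρ ∈ [0, ε], the iterates of the algorithm satisfy, for all t ∈ {1,…,T}: dist(x_{t+1}, X_ρ) ≤ √γ·dist(x_t, X_ρ) + η·G_f, and consequently dist(x_{t+1}, X_ρ) ≤ γ^{t/2}·dist(x_1, X_ρ) + η·G_f/(1 − √γ). -/
open scoped RealInnerProductSpace Classical

noncomputable def projBall {d : ℕ} (R : ℝ) (v : EuclideanSpace ℝ (Fin d)) :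
    EuclideanSpace ℝ (Fin d) := (R / max R ‖v‖) • v

def IsSubgradAt {d : ℕ} (g : EuclideanSpace ℝ (Fin d) → ℝ)
    (x s : EuclideanSpace ℝ (Fin d)) : Prop :=
  ∀ y, g x + ⟪s, y - x⟫ ≤ g y

theorem le_of_sq_le_sq_aux {a b : ℝ} (h : a ^ 2 ≤ b ^ 2) (hb : 0 ≤ b) : a ≤ b :=
  (le_abs_self a).trans (abs_le_of_sq_le_sq h hb)

theorem aux_eb {d : ℕ} {g : EuclideanSpace ℝ (Fin d) → ℝ} {ε σ : ℝ}
    (hgconv : ConvexOn ℝ Set.univ g)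
    (hA4ne : ∃ z, g z = -ε)
    (hA4 : ∀ z : EuclideanSpace ℝ (Fin d), g z = -ε → ∀ sz, IsSubgradAt g z sz → σ ≤ ‖sz‖)
    (x : EuclideanSpace ℝ (Fin d)) (hx : -ε < g x) :
    ∃ p, g p ≤ -ε ∧ σ * ‖x - p‖ ≤ g x + ε := by
  have hcont : Continuous g := by
    rw [← continuousOn_univ]; exact hgconv.continuousOn isOpen_univ
  have hKc : IsClosed {z | g z ≤ -ε} := isClosed_le hcont continuous_const
  have hKconv : Convex ℝ {z | g z ≤ -ε} := by simpa using hgconv.convex_le (-ε)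
  obtain ⟨z0, hz0⟩ := hA4ne
  obtain ⟨p, hpK, hp⟩ := exists_norm_eq_iInf_of_complete_convex ⟨z0, hz0.le⟩ hKc.isComplete hKconv x
  rw [norm_eq_iInf_iff_real_inner_le_zero hKconv hpK] at hp
  have hpK' : g p ≤ -ε := hpK
  have hne : x - p ≠ 0 := by
    intro h
    rw [sub_eq_zero] at h
    rw [h] at hx; linarith
  set u := x - p with hu
  have hupos : 0 < ‖u‖ := norm_pos_iff.mpr hne
  have huu : 0 < ⟪u, u⟫ := by rw [real_inner_self_eq_norm_sq]; positivity
  have hH : ∀ z, 0 ≤ ⟪u, z - p⟫ → 0 ≤ g z + ε := by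
    intro z hz
    by_contra hcon
    push Not at hcon
    have hopen : IsOpen {w | g w < -ε} := isOpen_lt hcont continuous_const
    have hc2 : Continuous (fun δ : ℝ => z + δ • u) := by fun_prop
    have h0 : (fun δ : ℝ => z + δ • u) ⁻¹' {w | g w < -ε} ∈ nhds (0:ℝ) := by
      apply (hopen.preimage hc2).mem_nhds
      simp; linarith
    obtain ⟨r, hr, hb⟩ := Metric.mem_nhds_iff.mp h0
    have hm : r / 2 ∈ Metric.ball (0:ℝ) r := by
      simp [abs_of_pos hr]; linarith
    have h1 : g (z + (r/2) • u) < -ε := hb hm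
    have h2 := hp _ (show z + (r/2) • u ∈ {z | g z ≤ -ε} from h1.le)
    rw [show z + (r/2) • u - p = (z - p) + (r/2) • u by abel, inner_add_right, inner_smul_right] at h2
    have : 0 < r / 2 * ⟪u, u⟫ := by positivity
    linarith
  have hgp : g p = -ε := by
    have := hH p (by simp)
    linarith
  let S : Set ℝ := (fun z => (g z + ε) / ⟪u, z - p⟫) '' {z | 0 < ⟪u, z - p⟫}
  have hSb : BddBelow S := by
    refine ⟨0, ?_⟩
    rintro _ ⟨z, hz, rfl⟩
    exact div_nonneg (hH z (le_of_lt hz)) (le_of_lt hz)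
  have hSne : S.Nonempty := ⟨_, x, huu, rfl⟩
  have hl0 : 0 ≤ sInf S := by
    apply le_csInf hSne
    rintro _ ⟨z, hz, rfl⟩
    exact div_nonneg (hH z (le_of_lt hz)) (le_of_lt hz)
  set l := sInf S with hl
  have hsub : ∀ z, l * ⟪u, z - p⟫ ≤ g z + ε := by
    intro z
    rcases lt_trichotomy ⟪u, z - p⟫ 0 with hz | hz | hz
    · have hle : -(g z + ε) / (-⟪u, z - p⟫) ≤ l := by
        apply le_csInf hSne
        rintro _ ⟨w, hw, rfl⟩
        have hw' : 0 < ⟪u, w - p⟫ := hw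
        show -(g z + ε) / (-⟪u, z - p⟫) ≤ (g w + ε) / ⟪u, w - p⟫
        set a := ⟪u, w - p⟫ with ha
        obtain ⟨b, hb⟩ : ∃ b, b = -⟪u, z - p⟫ := ⟨_, rfl⟩
        have hb0 : 0 < b := by linarith
        rw [← hb, div_le_div_iff₀ hb0 hw']
        have hab : 0 < a + b := by linarith
        have hsum : b / (a + b) + a / (a + b) = 1 := by field_simp; ring
        have hcv := hgconv.2 (Set.mem_univ w) (Set.mem_univ z)
          (show 0 ≤ b / (a+b) by positivity) (show 0 ≤ a / (a+b) by positivity) hsum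
        have hin : ⟪u, ((b / (a+b)) • w + (a/(a+b)) • z) - p⟫ = 0 := by
          have : ((b / (a+b)) • w + (a/(a+b)) • z) - p = (b / (a+b)) • (w - p) + (a/(a+b)) • (z - p) := by
            have h3 : p = (b / (a+b) + a/(a+b)) • p := by rw [hsum, one_smul]
            nth_rewrite 1 [h3]
            module
          rw [this, inner_add_right, inner_smul_right, inner_smul_right, ← ha,
            show ⟪u, z - p⟫ = -b by linarith]
          ring
        have h4 := hH _ hin.ge
        simp only [smul_eq_mul] at hcv
        have h5 : 0 ≤ (b / (a+b) * g w + a / (a+b) * g z + ε) * (a+b) := by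
          apply mul_nonneg _ hab.le; linarith
        have h6 : (b / (a+b) * g w + a / (a+b) * g z + ε) * (a+b) = b * (g w + ε) + a * (g z + ε) := by
          field_simp; ring
        linarith
      rw [div_le_iff₀ (by linarith)] at hle
      linarith
    · rw [hz, mul_zero]; exact hH z hz.ge
    · have : l ≤ (g z + ε) / ⟪u, z - p⟫ := csInf_le hSb ⟨z, hz, rfl⟩
      rwa [le_div_iff₀ hz] at this
  have hsg : IsSubgradAt g p (l • u) := by
    intro z
    rw [inner_smul_left, hgp]
    have := hsub z
    simp only [conj_trivial]
    linarith
  have hn := hA4 p hgp _ hsg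
  rw [norm_smul, Real.norm_of_nonneg hl0] at hn
  refine ⟨p, hpK', ?_⟩
  have h7 := hsub x
  rw [← hu, real_inner_self_eq_norm_sq] at h7
  nlinarith

theorem aux_eb2 {d : ℕ} {g : EuclideanSpace ℝ (Fin d) → ℝ} {ε σ ρ : ℝ}
    (hgconv : ConvexOn ℝ Set.univ g) (hσ : 0 < σ) (hρε : ρ ≤ ε)
    (hA4ne : ∃ z, g z = -ε)
    (hA4 : ∀ z : EuclideanSpace ℝ (Fin d), g z = -ε → ∀ sz, IsSubgradAt g z sz → σ ≤ ‖sz‖)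
    (x : EuclideanSpace ℝ (Fin d)) (hx : -ρ < g x) :
    σ * Metric.infDist x {z | g z ≤ -ρ} ≤ g x + ρ := by
  obtain ⟨p, hp, hpx⟩ := aux_eb hgconv hA4ne hA4 x (by linarith)
  have hA : 0 < g x + ε := by linarith
  obtain ⟨θ, hθ⟩ : ∃ θ, θ = (ε - ρ) / (g x + ε) := ⟨_, rfl⟩
  have hθ0 : 0 ≤ θ := by rw [hθ]; apply div_nonneg <;> linarith
  have hθ1 : θ ≤ 1 := by rw [hθ, div_le_one hA]; linarith
  have hθA : θ * (g x + ε) = ε - ρ := by rw [hθ]; field_simp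
  have hcv := hgconv.2 (Set.mem_univ p) (Set.mem_univ x) (sub_nonneg.mpr hθ1) hθ0 (by ring)
  simp only [smul_eq_mul] at hcv
  have hz : g ((1 - θ) • p + θ • x) ≤ -ρ := by nlinarith
  have hd : Metric.infDist x {z | g z ≤ -ρ} ≤ dist x ((1 - θ) • p + θ • x) :=
    Metric.infDist_le_dist_of_mem hz
  rw [dist_eq_norm, show x - ((1 - θ) • p + θ • x) = (1 - θ) • (x - p) by module, norm_smul,
    Real.norm_of_nonneg (sub_nonneg.mpr hθ1)] at hd
  have h1 : (1 - θ) * (σ * ‖x - p‖) ≤ (1 - θ) * (g x + ε) :=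
    mul_le_mul_of_nonneg_left hpx (sub_nonneg.mpr hθ1)
  nlinarith [mul_le_mul_of_nonneg_left hd hσ.le]

theorem aux_proj_mem {d : ℕ} {R : ℝ} (hR : 0 < R) (v : EuclideanSpace ℝ (Fin d)) :
    projBall R v ∈ Metric.closedBall (0 : EuclideanSpace ℝ (Fin d)) R := by
  have hm : 0 < max R ‖v‖ := lt_max_of_lt_left hR
  rw [mem_closedBall_zero_iff, projBall, norm_smul, Real.norm_of_nonneg (by positivity),
    div_mul_eq_mul_div, div_le_iff₀ hm]
  exact mul_le_mul_of_nonneg_left (le_max_right _ _) hR.le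

theorem aux_proj_le {d : ℕ} {R : ℝ} (hR : 0 < R) (v c : EuclideanSpace ℝ (Fin d)) (hc : ‖c‖ ≤ R) :
    ‖projBall R v - c‖ ≤ ‖v - c‖ := by
  unfold projBall
  rcases le_total ‖v‖ R with h | h
  · rw [max_eq_left h, div_self hR.ne', one_smul]
  · rw [max_eq_right h]
    have hv : 0 < ‖v‖ := by linarith
    obtain ⟨k, hk⟩ : ∃ k, k = R / ‖v‖ := ⟨_, rfl⟩
    have hk0 : 0 ≤ k := by rw [hk]; positivity
    have hk1 : k ≤ 1 := by rw [hk, div_le_one hv]; exact h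
    have hkv : k * ‖v‖ = R := by rw [hk]; field_simp
    rw [← hk]
    refine le_of_sq_le_sq_aux ?_ (by positivity)
    rw [norm_sub_sq_real, norm_sub_sq_real, norm_smul, inner_smul_left, Real.norm_of_nonneg hk0]
    simp only [conj_trivial]
    have hin : ⟪v, c⟫ ≤ ‖v‖ * R := (real_inner_le_norm v c).trans (by gcongr)
    have : 0 ≤ (1 - k) * (‖v‖ ^ 2 * (1 + k) - 2 * ⟪v, c⟫) := by
      apply mul_nonneg (by linarith)
      nlinarith
    nlinarith

theorem aux_step {d : ℕ} {g : EuclideanSpace ℝ (Fin d) → ℝ}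
    {Gg σ ρ D b : ℝ} (hσ : 0 < σ) (hGg : 0 < Gg) (hσGg : σ ≤ Gg)
    (x y s c : EuclideanSpace ℝ (Fin d)) (hs : s ≠ 0) (hsG : ‖s‖ ≤ Gg)
    (hsub : IsSubgradAt g x s) (hc : g c ≤ -ρ)
    (hxc : ‖x - c‖ = D) (hb : b = g x + ρ) (hD : σ * D ≤ max b 0) :
    ‖y - ((max (b + ⟪s, y - x⟫) 0) / ‖s‖ ^ 2) • s - c‖ ≤
      Real.sqrt (1 - σ ^ 2 / Gg ^ 2) * D + ‖y - x‖ := by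
  have hn : 0 < ‖s‖ := norm_pos_iff.mpr hs
  have hn2 : 0 < ‖s‖ ^ 2 := by positivity
  have hD0 : 0 ≤ D := by rw [← hxc]; positivity
  obtain ⟨n, hnn⟩ : ∃ n, n = ‖s‖ ^ 2 := ⟨_, rfl⟩
  rw [← hnn] at hn2 ⊢
  obtain ⟨α, hα⟩ : ∃ α, α = ⟪s, y - x⟫ := ⟨_, rfl⟩
  obtain ⟨m, hm⟩ : ∃ m, m = max b 0 := ⟨_, rfl⟩
  obtain ⟨m', hm'⟩ : ∃ m', m' = max (b + α) 0 := ⟨_, rfl⟩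
  rw [← hα, ← hm']
  have hk : (m' - m) ^ 2 ≤ (m' - m) * α := by
    rw [hm, hm']
    rcases le_total b 0 with h | h <;> rcases le_total (b + α) 0 with h' | h'
    · rw [max_eq_right h, max_eq_right h']; simp
    · rw [max_eq_right h, max_eq_left h']; nlinarith
    · rw [max_eq_left h, max_eq_right h']; nlinarith
    · rw [max_eq_left h, max_eq_left h']; nlinarith
  have h1 : ‖(y - x) - ((m' - m) / n) • s‖ ≤ ‖y - x‖ := by
    refine le_of_sq_le_sq_aux ?_ (by positivity)
    rw [norm_sub_sq_real, inner_smul_right, norm_smul, mul_pow, ← hnn, real_inner_comm, ← hα,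
      Real.norm_eq_abs, sq_abs]
    have : ((m' - m) / n) ^ 2 * n - 2 * ((m' - m) / n * α) = ((m' - m)^2 - 2 * ((m' - m) * α)) / n := by
      field_simp
    have h2 : ((m' - m)^2 - 2 * ((m' - m) * α)) / n ≤ 0 := by
      apply div_nonpos_of_nonpos_of_nonneg _ hn2.le
      nlinarith [sq_nonneg (m' - m)]
    linarith
  have hγ : 0 ≤ 1 - σ ^ 2 / Gg ^ 2 := by
    rw [sub_nonneg, div_le_one (by positivity)]; gcongr
  have h3 : ‖(x - c) - (m / n) • s‖ ≤ Real.sqrt (1 - σ ^ 2 / Gg ^ 2) * D := by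
    refine le_of_sq_le_sq_aux ?_ (by positivity)
    rw [mul_pow, Real.sq_sqrt hγ, norm_sub_sq_real, inner_smul_right, norm_smul, mul_pow, ← hnn,
      Real.norm_eq_abs, sq_abs, hxc, real_inner_comm]
    have h4 : m * b = m ^ 2 := by
      rw [hm]; rcases le_total b 0 with h | h
      · rw [max_eq_right h]; simp
      · rw [max_eq_left h]; ring
    have hm0 : 0 ≤ m := by rw [hm]; exact le_max_right _ _
    have h5 : b ≤ ⟪s, x - c⟫ := by
      have := hsub c
      rw [show c - x = -(x - c) by abel, inner_neg_right] at this
      linarith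
    have h6 : m ^ 2 ≤ m * ⟪s, x - c⟫ := by rw [← h4]; gcongr
    have h7 : (m / n) ^ 2 * n - 2 * (m / n * ⟪s, x - c⟫) = (m ^ 2 - 2 * (m * ⟪s, x - c⟫)) / n := by
      field_simp
    have h8 : (m ^ 2 - 2 * (m * ⟪s, x - c⟫)) / n ≤ - m ^ 2 / n := by
      gcongr; linarith
    have h9 : σ ^ 2 / Gg ^ 2 * D ^ 2 ≤ m ^ 2 / n := by
      rw [div_mul_eq_mul_div, ← mul_pow, hnn, hm]
      gcongr
    rw [neg_div] at h8
    nlinarith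
  have h10 : y - (m' / n) • s - c = ((x - c) - (m / n) • s) + ((y - x) - ((m' - m) / n) • s) := by
    rw [sub_div]; module
  rw [h10]
  exact (norm_add_le _ _).trans (add_le_add h3 h1)

theorem stmt16 {d T : ℕ} (hT : 1 ≤ T)
    {R Gf Gg ε σ η ρ : ℝ}
    (g : EuclideanSpace ℝ (Fin d) → ℝ)
    (f : ℕ → EuclideanSpace ℝ (Fin d) → ℝ)
    (x y s : ℕ → EuclideanSpace ℝ (Fin d))
    (hR : 0 < R) (hGf : 0 < Gf) (hGg : 0 < Gg)
    (hgconv : ConvexOn ℝ Set.univ g)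
    (hA1 : {z : EuclideanSpace ℝ (Fin d) | g z ≤ 0} ⊆ Metric.closedBall 0 R)
    (hfconv : ∀ t ∈ Finset.Icc 1 T, ConvexOn ℝ Set.univ (f t))
    (hfdiff : ∀ t ∈ Finset.Icc 1 T, Differentiable ℝ (f t))
    (hA2 : ∀ t ∈ Finset.Icc 1 T, ∀ z ∈ Metric.closedBall (0 : EuclideanSpace ℝ (Fin d)) R,
      ‖gradient (f t) z‖ ≤ Gf)
    (hA3 : ∀ z ∈ Metric.closedBall (0 : EuclideanSpace ℝ (Fin d)) R,
      ∀ sz, IsSubgradAt g z sz → ‖sz‖ ≤ Gg)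
    (hσ : 0 < σ) (hε : 0 < ε) (hσGg : σ ≤ Gg)
    (hA4ne : ∃ z, g z = -ε)
    (hA4 : ∀ z : EuclideanSpace ℝ (Fin d), g z = -ε → ∀ sz, IsSubgradAt g z sz → σ ≤ ‖sz‖)
    (hη : 0 < η) (hρ0 : 0 ≤ ρ) (hρε : ρ ≤ ε)
    (hx1 : x 1 ∈ Metric.closedBall (0 : EuclideanSpace ℝ (Fin d)) R)
    (hs : ∀ t ∈ Finset.Icc 1 T, IsSubgradAt g (x t) (s t))
    (hy : ∀ t ∈ Finset.Icc 1 T, y t = x t - η • gradient (f t) (x t))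
    (hupd : ∀ t ∈ Finset.Icc 1 T,
      x (t + 1) = if s t ≠ 0 then
          projBall R (y t - ((max (g (x t) + ⟪s t, y t - x t⟫ + ρ) 0) / ‖s t‖ ^ 2) • s t)
        else projBall R (y t))
    :
    ∀ t ∈ Finset.Icc 1 T,
      Metric.infDist (x (t + 1)) {z : EuclideanSpace ℝ (Fin d) | g z ≤ -ρ} ≤
        Real.sqrt (1 - σ ^ 2 / Gg ^ 2) * Metric.infDist (x t) {z : EuclideanSpace ℝ (Fin d) | g z ≤ -ρ} + η * Gf ∧
      Metric.infDist (x (t + 1)) {z : EuclideanSpace ℝ (Fin d) | g z ≤ -ρ} ≤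
        Real.sqrt (1 - σ ^ 2 / Gg ^ 2) ^ t * Metric.infDist (x 1) {z : EuclideanSpace ℝ (Fin d) | g z ≤ -ρ} +
          η * Gf / (1 - Real.sqrt (1 - σ ^ 2 / Gg ^ 2)) := by
  have hcont : Continuous g := by
    rw [← continuousOn_univ]; exact hgconv.continuousOn isOpen_univ
  have hKc : IsClosed {z | g z ≤ -ρ} := isClosed_le hcont continuous_const
  obtain ⟨z0, hz0⟩ := hA4ne
  have hKne : {z | g z ≤ -ρ}.Nonempty := ⟨z0, by rw [Set.mem_setOf_eq]; linarith⟩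
  have hxmem : ∀ t ∈ Finset.Icc 1 T, x t ∈ Metric.closedBall (0 : EuclideanSpace ℝ (Fin d)) R := by
    intro t ht
    rw [Finset.mem_Icc] at ht
    obtain ⟨k, rfl⟩ : ∃ k, t = k + 1 := ⟨t - 1, by omega⟩
    rcases Nat.eq_zero_or_pos k with rfl | hk
    · exact hx1
    · rw [hupd k (Finset.mem_Icc.mpr ⟨hk, by omega⟩)]
      split_ifs <;> exact aux_proj_mem hR _
  set r := Real.sqrt (1 - σ ^ 2 / Gg ^ 2) with hr
  have hr0 : 0 ≤ r := Real.sqrt_nonneg _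
  have hr1 : r < 1 := by
    rw [hr, Real.sqrt_lt' one_pos]
    have : 0 < σ ^ 2 / Gg ^ 2 := by positivity
    linarith
  have key : ∀ t ∈ Finset.Icc 1 T,
      Metric.infDist (x (t + 1)) {z : EuclideanSpace ℝ (Fin d) | g z ≤ -ρ} ≤
        r * Metric.infDist (x t) {z : EuclideanSpace ℝ (Fin d) | g z ≤ -ρ} + η * Gf := by
    intro t ht
    obtain ⟨c, hcK, hc⟩ := hKc.exists_infDist_eq_dist hKne (x t)
    have hcK' : g c ≤ -ρ := hcK
    have hcR : ‖c‖ ≤ R := by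
      rw [← mem_closedBall_zero_iff]
      apply hA1
      rw [Set.mem_setOf_eq]; linarith
    have hyx : ‖y t - x t‖ ≤ η * Gf := by
      rw [hy t ht, sub_sub_cancel_left, norm_neg, norm_smul, Real.norm_of_nonneg hη.le]
      exact mul_le_mul_of_nonneg_left (hA2 t ht _ (hxmem t ht)) hη.le
    refine (Metric.infDist_le_dist_of_mem hcK).trans ?_
    rw [dist_eq_norm, hupd t ht]
    split_ifs with h0
    · refine (aux_proj_le hR _ _ hcR).trans ?_
      have hb : σ * Metric.infDist (x t) {z | g z ≤ -ρ} ≤ max (g (x t) + ρ) 0 := by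
        by_cases h : -ρ < g (x t)
        · exact (aux_eb2 hgconv hσ hρε ⟨z0, hz0⟩ hA4 _ h).trans (le_max_left _ _)
        · rw [Metric.infDist_zero_of_mem (show x t ∈ {z | g z ≤ -ρ} from not_lt.mp h), mul_zero]
          exact le_max_right _ _
      have := aux_step (Gg := Gg) hσ hGg hσGg (x t) (y t) (s t) c h0
        (hA3 _ (hxmem t ht) _ (hs t ht)) (hs t ht) hcK'
        (by rw [hc, dist_eq_norm]) rfl hb
      rw [show g (x t) + ⟪s t, y t - x t⟫ + ρ = g (x t) + ρ + ⟪s t, y t - x t⟫ by ring]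
      linarith
    · refine (aux_proj_le hR _ _ hcR).trans ?_
      have hs0 : s t = 0 := not_not.mp h0
      have hx0 : g (x t) ≤ -ρ := by
        have := hs t ht z0
        rw [hs0, inner_zero_left] at this
        linarith
      have hd0 : Metric.infDist (x t) {z | g z ≤ -ρ} = 0 := Metric.infDist_zero_of_mem hx0
      rw [hd0] at hc ⊢
      rw [← dist_eq_zero.mp hc.symm]
      linarith
  have key2 : ∀ t, 1 ≤ t → t ≤ T →
      Metric.infDist (x (t + 1)) {z : EuclideanSpace ℝ (Fin d) | g z ≤ -ρ} ≤
        r ^ t * Metric.infDist (x 1) {z : EuclideanSpace ℝ (Fin d) | g z ≤ -ρ} +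
          η * Gf / (1 - r) := by
    have hr1' : 0 < 1 - r := by linarith
    have hq : r * (η * Gf / (1 - r)) + η * Gf = η * Gf / (1 - r) := by field_simp; ring
    have hq0 : 0 ≤ η * Gf / (1 - r) := by positivity
    intro t ht
    induction t, ht using Nat.le_induction with
    | base =>
      intro hT1
      have h1 := key 1 (Finset.mem_Icc.mpr ⟨le_rfl, hT1⟩)
      rw [pow_one]
      nlinarith [mul_nonneg hr0 hq0]
    | succ k hk ih =>
      intro hkT
      have h1 := key (k + 1) (Finset.mem_Icc.mpr ⟨by omega, hkT⟩)
      have h2 := mul_le_mul_of_nonneg_left (ih (by omega)) hr0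
      rw [pow_succ]
      nlinarith
  intro t ht
  exact ⟨key t ht, key2 t (Finset.mem_Icc.mp ht).1 (Finset.mem_Icc.mp ht).2⟩
end

section
/- (Corollary 1 under weaker cost-gradient assumptions.) Assume (A1), (A3), (A4), and (A2') each f_t : ℝ^d → ℝ (t = 1,…,T) is convex and differentiable with ‖∇f_t(x)‖ ≤ G_f for all x ∈ X (rather than all x ∈ RB). Suppose T ≥ 1, the initial action satisfies g(x_1) ≤ −α for some α ∈ (0, ε], and the algorithm is run with parameters ρ = α/√T and η = ξ·ρ/(G_f·G_g). Then: (i) g(x_t) ≤ 0 for all t ∈ {1,…,T}; and (ii) for every point x* with g(x*) ≤ 0, ∑_{t=1}^T (f_t(x_t) − f_t(x*)) ≤ ( 2·G_f·G_g·R²/(ξ·α) + G_f·ξ·α/(2·G_g) + G_f·α/σ )·√T. -/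
open scoped RealInnerProductSpace Classical

section helpers

variable {E : Type*} [NormedAddCommGroup E] [InnerProductSpace ℝ E]

theorem aux_proj {R : ℝ} (hR : 0 < R) (v p : E) (hp : ‖p‖ ≤ R) :
    ‖(R / max R ‖v‖) • v - p‖ ≤ ‖v - p‖ := by
  rcases le_total ‖v‖ R with h | h
  · rw [max_eq_left h, div_self hR.ne', one_smul]
  · rw [max_eq_right h]
    have hv : 0 < ‖v‖ := hR.trans_le h
    set c := R / ‖v‖ with hc
    have hcv : c * ‖v‖ = R := by rw [hc]; field_simp
    have hc1 : c ≤ 1 := by rw [hc, div_le_one hv]; exact h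
    have hc0 : 0 < c := by positivity
    apply le_of_sq_le_sq _ (norm_nonneg _)
    rw [norm_sub_sq_real, norm_sub_sq_real, norm_smul, inner_smul_left]
    simp only [Real.norm_eq_abs, abs_of_pos hc0, conj_trivial]
    have hin : ⟪v, p⟫ ≤ ‖v‖ * R := (real_inner_le_norm v p).trans (by gcongr)
    rw [← hcv] at hin
    nlinarith [mul_nonneg (sub_nonneg.2 hc1) (sub_nonneg.2 hin),
      mul_nonneg (sq_nonneg (1 - c)) (sq_nonneg ‖v‖)]

theorem aux_projmem {R : ℝ} (hR : 0 < R) (v : E) : ‖(R / max R ‖v‖) • v‖ ≤ R := by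
  have : 0 < max R ‖v‖ := lt_max_of_lt_left hR
  rw [norm_smul, Real.norm_eq_abs, abs_of_pos (by positivity), div_mul_eq_mul_div,
    div_le_iff₀ this]
  gcongr
  exact le_max_right _ _

theorem aux_nonexp (s x v w : E) (b : ℝ) :
    ‖(v - (max (b + ⟪s, v - x⟫) 0 / ‖s‖ ^ 2) • s) - (w - (max (b + ⟪s, w - x⟫) 0 / ‖s‖ ^ 2) • s)‖
      ≤ ‖v - w‖ := by
  by_cases hs : s = 0
  · simp [hs]
  have hn : 0 < ‖s‖ ^ 2 := by have := norm_pos_iff.2 hs; positivity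
  set a := max (b + ⟪s, v - x⟫) 0 with ha
  set a' := max (b + ⟪s, w - x⟫) 0 with ha'
  have e : (v - (a / ‖s‖ ^ 2) • s) - (w - (a' / ‖s‖ ^ 2) • s)
      = (v - w) - ((a - a') / ‖s‖ ^ 2) • s := by
    rw [sub_div, sub_smul]; abel
  rw [e]
  have hin : ⟪v - w, s⟫ = (b + ⟪s, v - x⟫) - (b + ⟪s, w - x⟫) := by
    rw [real_inner_comm]; simp only [inner_sub_right]; ring
  have key : (a - a') ^ 2 ≤ (a - a') * ⟪v - w, s⟫ := by
    rw [hin, ha, ha']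
    generalize b + ⟪s, v - x⟫ = β
    generalize b + ⟪s, w - x⟫ = β'
    rcases le_total β 0 with h | h <;> rcases le_total β' 0 with h' | h' <;>
      simp only [max_eq_left, max_eq_right, h, h'] <;> nlinarith
  apply le_of_sq_le_sq _ (norm_nonneg _)
  rw [norm_sub_sq_real, norm_smul, inner_smul_right, mul_pow, Real.norm_eq_abs, sq_abs]
  have : ((a - a') / ‖s‖ ^ 2) ^ 2 * ‖s‖ ^ 2 ≤ (a - a') / ‖s‖ ^ 2 * ⟪v - w, s⟫ := by
    have e1 : ((a - a') / ‖s‖ ^ 2) ^ 2 * ‖s‖ ^ 2 = (a - a') ^ 2 / ‖s‖ ^ 2 := by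
      field_simp
    rw [e1, div_mul_eq_mul_div]
    gcongr
  have h0 : 0 ≤ ((a - a') / ‖s‖ ^ 2) ^ 2 * ‖s‖ ^ 2 := by positivity
  linarith

theorem aux_contr {σ G b : ℝ} (hσ : 0 < σ) (hG : 0 < G) (hσG : σ ≤ G) (s x p : E)
    (hp : b + ⟪s, p - x⟫ ≤ 0) (hsG : ‖s‖ ≤ G) (hD : σ * ‖x - p‖ ≤ max b 0) :
    ‖(x - (max b 0 / ‖s‖ ^ 2) • s) - p‖ ≤ √(1 - σ ^ 2 / G ^ 2) * ‖x - p‖ := by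
  have hin : ⟪s, p - x⟫ = - ⟪x - p, s⟫ := by
    rw [real_inner_comm, ← neg_sub x p, inner_neg_left]
  rcases le_or_gt b 0 with hb | hb
  · have : ‖x - p‖ = 0 := by
      rw [max_eq_right hb] at hD
      nlinarith [norm_nonneg (x - p)]
    have h2 : max b 0 = 0 := max_eq_right hb
    rw [h2]; simp [this]
  · have hs : s ≠ 0 := by
      rintro rfl; simp at hp; linarith
    have hs' := norm_pos_iff.2 hs
    have hn : 0 < ‖s‖ ^ 2 := by positivity
    rw [max_eq_left hb.le] at hD ⊢
    apply le_of_sq_le_sq _ (by positivity)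
    have hγ : 0 ≤ 1 - σ ^ 2 / G ^ 2 := by
      rw [sub_nonneg, div_le_one (by positivity)]; gcongr
    rw [mul_pow, Real.sq_sqrt hγ]
    rw [sub_right_comm, norm_sub_sq_real, norm_smul, inner_smul_right, mul_pow, Real.norm_eq_abs,
      sq_abs]
    have h1 : (b / ‖s‖ ^ 2) ^ 2 * ‖s‖ ^ 2 = b ^ 2 / ‖s‖ ^ 2 := by field_simp
    have h2 : b ^ 2 / ‖s‖ ^ 2 ≤ b / ‖s‖ ^ 2 * ⟪x - p, s⟫ := by
      rw [div_mul_eq_mul_div]; gcongr; nlinarith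
    have h3 : σ ^ 2 / G ^ 2 * ‖x - p‖ ^ 2 ≤ b ^ 2 / ‖s‖ ^ 2 := by
      have : σ ^ 2 / G ^ 2 * ‖x - p‖ ^ 2 = (σ * ‖x - p‖) ^ 2 / G ^ 2 := by ring
      rw [this]
      gcongr
    rw [h1]; linarith

theorem aux_first_order [CompleteSpace E] {f : E → ℝ} (hc : ConvexOn ℝ Set.univ f)
    (hd : Differentiable ℝ f) (x y : E) : f x - f y ≤ ⟪gradient f x, x - y⟫ := by
  have h1 : HasDerivAt (fun t : ℝ => f (x + t • (y - x))) (fderiv ℝ f x (y - x)) 0 := by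
    have hl : HasDerivAt (fun t : ℝ => x + t • (y - x)) (y - x) 0 := by
      simpa using ((hasDerivAt_id (0:ℝ)).smul_const (y - x)).const_add x
    have hf : HasFDerivAt f (fderiv ℝ f x) (x + (0:ℝ) • (y - x)) := by
      simpa using (hd x).hasFDerivAt
    exact hf.comp_hasDerivAt (0:ℝ) hl
  have h2 : ConvexOn ℝ Set.univ (fun t : ℝ => f (x + t • (y - x))) := by
    refine ⟨convex_univ, fun a _ b _ p q hp hq hpq => ?_⟩
    have := hc.2 (Set.mem_univ (x + a • (y - x))) (Set.mem_univ (x + b • (y - x))) hp hq hpq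
    refine le_trans (le_of_eq ?_) this
    show f _ = f _
    congr 1
    have hx : x = p • x + q • x := by rw [← add_smul, hpq, one_smul]
    simp only [smul_add, add_smul, smul_eq_mul, mul_smul]
    nth_rewrite 1 [hx]
    abel
  have h3 := h2.le_slope_of_hasDerivAt (Set.mem_univ 0) (Set.mem_univ 1) one_pos h1
  have h4 : fderiv ℝ f x (y - x) = ⟪gradient f x, y - x⟫ := by
    simp [gradient]
  rw [h4, slope_def_field] at h3
  simp only [one_smul, zero_smul, add_zero, sub_zero, div_one, add_sub_cancel] at h3
  rw [← neg_sub y x, inner_neg_right]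
  linarith

theorem aux_errbd_eps [FiniteDimensional ℝ E] {g : E → ℝ} {ε σ : ℝ}
    (hg : ConvexOn ℝ Set.univ g) (hσ : 0 < σ) (hne : ∃ z, g z = -ε)
    (hA4 : ∀ z : E, g z = -ε → ∀ sz, (∀ y, g z + ⟪sz, y - z⟫ ≤ g y) → σ ≤ ‖sz‖)
    (x : E) (hx : -ε < g x) : ∃ p, g p = -ε ∧ σ * ‖x - p‖ ≤ g x + ε := by
  have hcont : Continuous g := by
    rw [← continuousOn_univ]; exact hg.continuousOn isOpen_univ
  have : CompleteSpace E := FiniteDimensional.complete ℝ E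
  set K : Set E := {z | g z ≤ -ε} with hK
  have hKc : Convex ℝ K := by simpa using hg.convex_le (-ε)
  have hKcl : IsClosed K := isClosed_le hcont continuous_const
  obtain ⟨z0, hz0⟩ := hne
  obtain ⟨p, hpK, hp⟩ := exists_norm_eq_iInf_of_complete_convex (K := K) ⟨z0, hz0.le⟩
    hKcl.isComplete hKc x
  rw [norm_eq_iInf_iff_real_inner_le_zero hKc hpK] at hp
  set u := x - p with hu
  have hu0 : u ≠ 0 := by
    intro h
    have : x = p := sub_eq_zero.1 h
    rw [this] at hx
    exact absurd hx (not_lt.2 hpK)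
  have hupos : 0 < ‖u‖ := norm_pos_iff.2 hu0
  have hpos : ∀ z, 0 < ⟪u, z - p⟫ → -ε < g z := by
    intro z hz
    by_contra h
    exact absurd (hp z (not_lt.1 h)) (not_le.2 hz)
  have hzero : ∀ z, ⟪u, z - p⟫ = 0 → -ε ≤ g z := by
    intro z hz
    by_contra! h
    have hc2 : Continuous (fun t : ℝ => g (z + t • u)) := by fun_prop
    have h0 : (fun t : ℝ => g (z + t • u)) 0 < -ε := by simpa using h
    have hev := (hc2.continuousAt (x := 0)).eventually (gt_mem_nhds h0)
    obtain ⟨δ, hδ, hball⟩ := Metric.eventually_nhds_iff.1 hev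
    have h1 := hball (y := δ / 2) (by
      rw [Real.dist_eq, sub_zero, abs_of_pos (by positivity)]; linarith)
    have h2 := hpos (z + (δ / 2) • u) (by
      rw [add_sub_right_comm, inner_add_right, hz, inner_smul_right, real_inner_self_eq_norm_sq]
      positivity)
    exact absurd h1 (not_lt.2 h2.le)
  have hgp : g p = -ε := le_antisymm hpK (hzero p (by simp))
  set A : Set ℝ := {r | ∃ z, ⟪u, z - p⟫ < 0 ∧ r = (g z + ε) / ⟪u, z - p⟫} with hA
  set B : Set ℝ := {r | ∃ z, 0 < ⟪u, z - p⟫ ∧ r = (g z + ε) / ⟪u, z - p⟫} with hB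
  have hAne : A.Nonempty := ⟨_, p - u, by
    simp only [sub_sub_cancel_left, inner_neg_right, real_inner_self_eq_norm_sq]
    nlinarith, rfl⟩
  have hBne : B.Nonempty := ⟨_, p + u, by
    simp only [add_sub_cancel_left, real_inner_self_eq_norm_sq]
    positivity, rfl⟩
  have hAB : ∀ a ∈ A, ∀ b ∈ B, a ≤ b := by
    rintro a ⟨z1, h1, rfl⟩ b ⟨z2, h2, rfl⟩
    set τ1 := ⟪u, z1 - p⟫
    set τ2 := ⟪u, z2 - p⟫
    have hd : 0 < τ2 - τ1 := by linarith
    have hsum : τ2 / (τ2 - τ1) + (-τ1) / (τ2 - τ1) = 1 := by field_simp; ring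
    have ha1 : 0 ≤ τ2 / (τ2 - τ1) := by positivity
    have hb1 : 0 ≤ (-τ1) / (τ2 - τ1) := div_nonneg (by linarith) hd.le
    have hcv := hg.2 (Set.mem_univ z1) (Set.mem_univ z2) ha1 hb1 hsum
    have hz : ⟪u, ((τ2 / (τ2 - τ1)) • z1 + ((-τ1) / (τ2 - τ1)) • z2) - p⟫ = 0 := by
      have : ((τ2 / (τ2 - τ1)) • z1 + ((-τ1) / (τ2 - τ1)) • z2) - p
          = (τ2 / (τ2 - τ1)) • (z1 - p) + ((-τ1) / (τ2 - τ1)) • (z2 - p) := by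
        have hx : p = (τ2 / (τ2 - τ1)) • p + ((-τ1) / (τ2 - τ1)) • p := by
          rw [← add_smul, hsum, one_smul]
        nth_rewrite 1 [hx]
        simp only [smul_sub]; abel
      rw [this, inner_add_right, inner_smul_right, inner_smul_right]
      show τ2 / (τ2 - τ1) * τ1 + (-τ1) / (τ2 - τ1) * τ2 = 0
      ring
    have h3 := (hzero _ hz).trans hcv
    simp only [smul_eq_mul] at h3
    have h4 : 0 ≤ τ2 * (g z1 + ε) + (-τ1) * (g z2 + ε) := by
      have e : τ2 * (g z1 + ε) + (-τ1) * (g z2 + ε) = (τ2 - τ1) *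
          (τ2 / (τ2 - τ1) * g z1 + (-τ1) / (τ2 - τ1) * g z2 + ε) := by
        field_simp; ring
      rw [e]
      exact mul_nonneg hd.le (by linarith)
    rw [← neg_div_neg_eq, div_le_div_iff₀ (by linarith) h2]
    nlinarith
  obtain ⟨c, hcA, hcB⟩ := exists_between_of_forall_le hAne hBne hAB
  have hsub : ∀ z, -ε + c * ⟪u, z - p⟫ ≤ g z := by
    intro z
    rcases lt_trichotomy ⟪u, z - p⟫ 0 with h | h | h
    · have := hcA ⟨z, h, rfl⟩
      rw [div_le_iff_of_neg h] at this
      linarith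
    · rw [h]; linarith [hzero z h]
    · have := hcB ⟨z, h, rfl⟩
      rw [le_div_iff₀ h] at this
      linarith
  have hc0 : 0 ≤ c := by
    by_contra! hc
    have := hA4 p hgp 0 (by
      intro z
      rw [inner_zero_left, hgp]
      rcases le_or_gt ⟪u, z - p⟫ 0 with h | h
      · nlinarith [hsub z]
      · linarith [hpos z h])
    rw [norm_zero] at this
    linarith
  have hcs := hA4 p hgp (c • u) (by
    intro z; rw [inner_smul_left, hgp]; simpa using hsub z)
  rw [norm_smul, Real.norm_eq_abs, abs_of_nonneg hc0] at hcs
  refine ⟨p, hgp, ?_⟩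
  have hfin := hsub x
  rw [← hu, real_inner_self_eq_norm_sq] at hfin
  nlinarith

theorem aux_errbd [FiniteDimensional ℝ E] {g : E → ℝ} {ε σ ρ : ℝ}
    (hg : ConvexOn ℝ Set.univ g) (hσ : 0 < σ) (hne : ∃ z, g z = -ε)
    (hA4 : ∀ z : E, g z = -ε → ∀ sz, (∀ y, g z + ⟪sz, y - z⟫ ≤ g y) → σ ≤ ‖sz‖)
    (hρ : ρ ≤ ε) (x : E) : ∃ q, g q ≤ -ρ ∧ σ * ‖x - q‖ ≤ max (g x + ρ) 0 := by
  rcases le_or_gt (g x) (-ρ) with h | h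
  · exact ⟨x, h, by simp⟩
  obtain ⟨p, hp, hpd⟩ := aux_errbd_eps hg hσ hne hA4 x (by linarith)
  have hd : 0 < g x + ε := by linarith
  have hd' : 0 ≤ g x + ρ := by linarith
  set a := (g x + ρ) / (g x + ε) with ha
  set b := (ε - ρ) / (g x + ε) with hb
  have hab : a + b = 1 := by rw [ha, hb]; field_simp; ring
  have ha0 : 0 ≤ a := by positivity
  have hb0 : 0 ≤ b := div_nonneg (by linarith) hd.le
  have hcv := hg.2 (Set.mem_univ p) (Set.mem_univ x) ha0 hb0 hab
  refine ⟨a • p + b • x, hcv.trans (le_of_eq ?_), ?_⟩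
  · rw [hp, ha, hb]; simp only [smul_eq_mul]; field_simp; ring
  · have e : x - (a • p + b • x) = a • (x - p) := by
      have hx : x = a • x + b • x := by rw [← add_smul, hab, one_smul]
      nth_rewrite 1 [hx]
      rw [smul_sub]; abel
    rw [e, norm_smul, Real.norm_eq_abs, abs_of_nonneg ha0, max_eq_left hd']
    have : a * (g x + ε) = g x + ρ := by rw [ha]; field_simp
    nlinarith

end helpers

theorem stmt17 {d T : ℕ} (hT : 1 ≤ T)
    {R Gf Gg ε σ η ρ α : ℝ}
    (g : EuclideanSpace ℝ (Fin d) → ℝ)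
    (f : ℕ → EuclideanSpace ℝ (Fin d) → ℝ)
    (x y s : ℕ → EuclideanSpace ℝ (Fin d))
    (hR : 0 < R) (hGf : 0 < Gf) (hGg : 0 < Gg)
    (hgconv : ConvexOn ℝ Set.univ g)
    (hA1 : {z : EuclideanSpace ℝ (Fin d) | g z ≤ 0} ⊆ Metric.closedBall 0 R)
    (hfconv : ∀ t ∈ Finset.Icc 1 T, ConvexOn ℝ Set.univ (f t))
    (hfdiff : ∀ t ∈ Finset.Icc 1 T, Differentiable ℝ (f t))
    (hA2' : ∀ t ∈ Finset.Icc 1 T, ∀ z : EuclideanSpace ℝ (Fin d), g z ≤ 0 →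
      ‖gradient (f t) z‖ ≤ Gf)
    (hA3 : ∀ z ∈ Metric.closedBall (0 : EuclideanSpace ℝ (Fin d)) R,
      ∀ sz, IsSubgradAt g z sz → ‖sz‖ ≤ Gg)
    (hσ : 0 < σ) (hε : 0 < ε) (hσGg : σ ≤ Gg)
    (hA4ne : ∃ z, g z = -ε)
    (hA4 : ∀ z : EuclideanSpace ℝ (Fin d), g z = -ε → ∀ sz, IsSubgradAt g z sz → σ ≤ ‖sz‖)
    (hα : 0 < α) (hαε : α ≤ ε)
    (hx1g : g (x 1) ≤ -α)
    (hρdef : ρ = α / Real.sqrt T)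
    (hηdef : η = (1 - Real.sqrt (1 - σ ^ 2 / Gg ^ 2)) * ρ / (Gf * Gg))
    (hs : ∀ t ∈ Finset.Icc 1 T, IsSubgradAt g (x t) (s t))
    (hy : ∀ t ∈ Finset.Icc 1 T, y t = x t - η • gradient (f t) (x t))
    (hupd : ∀ t ∈ Finset.Icc 1 T,
      x (t + 1) = if s t ≠ 0 then
          projBall R (y t - ((max (g (x t) + ⟪s t, y t - x t⟫ + ρ) 0) / ‖s t‖ ^ 2) • s t)
        else projBall R (y t))
    :
    (∀ t ∈ Finset.Icc 1 T, g (x t) ≤ 0) ∧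
    (∀ xstar : EuclideanSpace ℝ (Fin d), g xstar ≤ 0 →
      ∑ t ∈ Finset.Icc 1 T, (f t (x t) - f t xstar) ≤
        (2 * Gf * Gg * R ^ 2 / ((1 - Real.sqrt (1 - σ ^ 2 / Gg ^ 2)) * α) +
          Gf * (1 - Real.sqrt (1 - σ ^ 2 / Gg ^ 2)) * α / (2 * Gg) +
          Gf * α / σ) * Real.sqrt T) := by
  have hTr : (1:ℝ) ≤ T := by exact_mod_cast hT
  have hsT : 1 ≤ √(T:ℝ) := Real.one_le_sqrt.2 hTr
  have hsT0 : 0 < √(T:ℝ) := by linarith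
  have hρ0 : 0 < ρ := by rw [hρdef]; positivity
  have hρα : ρ ≤ α := by rw [hρdef]; exact div_le_self hα.le hsT
  have hρε := hρα.trans hαε
  set ξ := 1 - √(1 - σ ^ 2 / Gg ^ 2) with hξ
  have hξ0 : 0 < ξ := by
    have : √(1 - σ ^ 2 / Gg ^ 2) < 1 := by
      rw [Real.sqrt_lt' one_pos]
      have : 0 < σ ^ 2 / Gg ^ 2 := by positivity
      linarith
    linarith
  have hη0 : 0 < η := by rw [hηdef]; positivity
  have herr := aux_errbd (ρ := ρ) hgconv hσ hA4ne hA4 hρε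
  have hball : ∀ z, g z ≤ 0 → ‖z‖ ≤ R := fun z hz => by simpa using hA1 hz
  -- the update in uniform form
  have hupd' : ∀ t ∈ Finset.Icc 1 T, x (t + 1) = projBall R
      (y t - (max ((g (x t) + ρ) + ⟪s t, y t - x t⟫) 0 / ‖s t‖ ^ 2) • s t) := by
    intro t ht
    rw [hupd t ht, add_right_comm]
    split_ifs with h
    · rfl
    · have : s t = 0 := not_not.1 h
      simp [this]
  have hhalf : ∀ t ∈ Finset.Icc 1 T, ∀ p, g p ≤ -ρ →
      (g (x t) + ρ) + ⟪s t, p - x t⟫ ≤ 0 := by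
    intro t ht p hp
    have := hs t ht p
    linarith
  have hy' : ∀ t ∈ Finset.Icc 1 T, g (x t) ≤ 0 → ‖y t - x t‖ ≤ η * Gf := by
    intro t ht hgx
    rw [hy t ht, sub_sub_cancel_left, norm_neg, norm_smul, Real.norm_eq_abs, abs_of_pos hη0]
    gcongr
    exact hA2' t ht _ hgx
  -- the invariant
  have hgle : ∀ t ∈ Finset.Icc 1 T, ‖x t‖ ≤ R → (∃ p, g p ≤ -ρ ∧ ‖x t - p‖ ≤ ρ / Gg) →
      g (x t) ≤ 0 := by
    rintro t ht hxR ⟨p, hp, hpd⟩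
    have h1 := hs t ht p
    have h2 : ‖s t‖ ≤ Gg := hA3 (x t) (by simpa using hxR) _ (hs t ht)
    have h3 : -⟪s t, p - x t⟫ ≤ Gg * (ρ / Gg) := by
      rw [← inner_neg_right, neg_sub]
      exact (real_inner_le_norm _ _).trans (by gcongr)
    have h4 : Gg * (ρ / Gg) = ρ := by field_simp
    linarith
  have hinv : ∀ n, n + 1 ≤ T → ‖x (n + 1)‖ ≤ R ∧ ∃ p, g p ≤ -ρ ∧ ‖x (n + 1) - p‖ ≤ ρ / Gg := by
    intro n
    induction n with
    | zero =>
      intro _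
      refine ⟨hball _ (by simpa using by linarith), x 1, by linarith, ?_⟩
      simp only [zero_add, sub_self, norm_zero]
      positivity
    | succ n ih =>
      intro hn
      obtain ⟨hxR, p, hp, hpd⟩ := ih (by omega)
      have ht : n + 1 ∈ Finset.Icc 1 T := Finset.mem_Icc.2 ⟨by omega, by omega⟩
      have hg0 := hgle _ ht hxR ⟨p, hp, hpd⟩
      have hu := hupd' _ ht
      have hyt := hy' _ ht hg0
      have hhalf' := hhalf _ ht
      have hsG : ‖s (n + 1)‖ ≤ Gg := hA3 (x (n + 1)) (by simpa using hxR) _ (hs _ ht)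
      rw [hu]
      refine ⟨aux_projmem hR _, ?_⟩
      -- choose a good reference point
      obtain ⟨q, hq, hqd, hqe⟩ : ∃ q, g q ≤ -ρ ∧ ‖x (n + 1) - q‖ ≤ ρ / Gg ∧
          σ * ‖x (n + 1) - q‖ ≤ max (g (x (n + 1)) + ρ) 0 := by
        obtain ⟨q, hq, hqe⟩ := herr (x (n + 1))
        rcases le_total ‖x (n + 1) - p‖ ‖x (n + 1) - q‖ with h | h
        · exact ⟨p, hp, hpd, le_trans (by gcongr) hqe⟩
        · exact ⟨q, hq, h.trans hpd, hqe⟩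
      refine ⟨q, hq, ?_⟩
      refine (aux_proj hR _ q (hball q (by linarith))).trans ?_
      have h1 := aux_nonexp (s (n + 1)) (x (n + 1)) (y (n + 1)) (x (n + 1)) (g (x (n + 1)) + ρ)
      have h2 := aux_contr hσ hGg hσGg (s (n + 1)) (x (n + 1)) q (hhalf' q hq) hsG hqe
      simp only [sub_self, inner_zero_right, add_zero] at h1
      refine (norm_sub_le_norm_sub_add_norm_sub _ _ _).trans
        ((add_le_add (h1.trans hyt) h2).trans ?_)
      have h3 : √(1 - σ ^ 2 / Gg ^ 2) * ‖x (n + 1) - q‖ ≤ (1 - ξ) * (ρ / Gg) := by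
        rw [hξ, sub_sub_cancel]; gcongr
      have h4 : η * Gf = ξ * (ρ / Gg) := by rw [hηdef]; field_simp
      linarith
  have hfeas : ∀ t ∈ Finset.Icc 1 T, g (x t) ≤ 0 := by
    intro t ht
    obtain ⟨h1, h2⟩ := Finset.mem_Icc.1 ht
    obtain ⟨n, rfl⟩ := Nat.exists_eq_add_of_le' h1
    exact hgle _ ht (hinv n h2).1 (hinv n h2).2
  refine ⟨hfeas, fun z hz => ?_⟩
  obtain ⟨q, hq, hqe⟩ := herr z
  have hqz : ‖q - z‖ ≤ ρ / σ := by
    rw [le_div_iff₀ hσ, norm_sub_rev, mul_comm]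
    exact hqe.trans (max_le (by linarith) hρ0.le)
  have hq0 : g q ≤ 0 := by linarith
  have hstep : ∀ t ∈ Finset.Icc 1 T, f t (x t) - f t z ≤
      (‖x t - q‖ ^ 2 - ‖x (t + 1) - q‖ ^ 2) / (2 * η) + (η * Gf ^ 2 / 2 + Gf * (ρ / σ)) := by
    intro t ht
    have h1 := aux_first_order (hfconv t ht) (hfdiff t ht) (x t) q
    have h2 := aux_first_order (hfconv t ht) (hfdiff t ht) q z
    have h3 : ⟪gradient (f t) q, q - z⟫ ≤ Gf * (ρ / σ) :=
      (real_inner_le_norm _ _).trans (by gcongr; exact hA2' t ht q hq0)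
    have h4 : ‖x (t + 1) - q‖ ≤ ‖y t - q‖ := by
      rw [hupd' t ht]
      refine (aux_proj hR _ q (hball q hq0)).trans ?_
      have := aux_nonexp (s t) (x t) (y t) q (g (x t) + ρ)
      rw [max_eq_right (hhalf t ht q hq)] at this
      simpa using this
    have h5 : ‖x (t + 1) - q‖ ^ 2 ≤ ‖y t - q‖ ^ 2 := by gcongr
    have h6 : ‖y t - q‖ ^ 2 = ‖x t - q‖ ^ 2 - 2 * (η * ⟪gradient (f t) (x t), x t - q⟫)
        + η ^ 2 * ‖gradient (f t) (x t)‖ ^ 2 := by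
      rw [hy t ht, sub_right_comm, norm_sub_sq_real, inner_smul_right, norm_smul, mul_pow,
        Real.norm_eq_abs, sq_abs, real_inner_comm]
    have h7 : ‖gradient (f t) (x t)‖ ^ 2 ≤ Gf ^ 2 := by
      gcongr; exact hA2' t ht _ (hfeas t ht)
    have h8 : ⟪gradient (f t) (x t), x t - q⟫ ≤
        (‖x t - q‖ ^ 2 - ‖x (t + 1) - q‖ ^ 2) / (2 * η) + η * Gf ^ 2 / 2 := by
      have e : (‖x t - q‖ ^ 2 - ‖x (t + 1) - q‖ ^ 2) / (2 * η) + η * Gf ^ 2 / 2 =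
        (‖x t - q‖ ^ 2 - ‖x (t + 1) - q‖ ^ 2 + η ^ 2 * Gf ^ 2) / (2 * η) := by
        field_simp
      rw [e, le_div_iff₀ (by positivity)]
      have := mul_le_mul_of_nonneg_left h7 (sq_nonneg η)
      linarith
    linarith
  have hsum := Finset.sum_le_sum hstep
  refine hsum.trans ?_
  have htel : ∑ t ∈ Finset.Icc 1 T, (‖x t - q‖ ^ 2 - ‖x (t + 1) - q‖ ^ 2)
      = ‖x 1 - q‖ ^ 2 - ‖x (T + 1) - q‖ ^ 2 := by
    clear * -
    induction T with
    | zero => simp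
    | succ n ih => rw [Finset.sum_Icc_succ_top (by omega), ih]; ring
  rw [Finset.sum_add_distrib, ← Finset.sum_div, htel, Finset.sum_const, Nat.card_Icc,
    Nat.add_sub_cancel, nsmul_eq_mul]
  have hx1q : ‖x 1 - q‖ ≤ 2 * R := by
    have := norm_sub_le (x 1) q
    have h1 := hball (x 1) (by linarith)
    have h2 := hball q hq0
    linarith
  have hx1q2 : ‖x 1 - q‖ ^ 2 - ‖x (T + 1) - q‖ ^ 2 ≤ (2 * R) ^ 2 := by
    have : ‖x 1 - q‖ ^ 2 ≤ (2 * R) ^ 2 := by gcongr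
    nlinarith [sq_nonneg ‖x (T + 1) - q‖]
  have hfirst : (‖x 1 - q‖ ^ 2 - ‖x (T + 1) - q‖ ^ 2) / (2 * η) ≤ (2 * R) ^ 2 / (2 * η) := by
    gcongr
  refine (add_le_add_left hfirst _).trans (le_of_eq ?_)
  have hTT : (T:ℝ) = √(T:ℝ) ^ 2 := (Real.sq_sqrt (by positivity)).symm
  rw [hηdef, hρdef]
  generalize √(T:ℝ) = r at *
  rw [hTT]
  clear_value ξ
  field_simp
  ring
end
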